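/- Let D_T and {D_{S_i}}_{i=1}^k be the target distribution and k source distributions over X with labeling functions f_T and f_{S_i}, and let H be a hypothesis class of binary classifiers with VC-dimension d. Let D̂_T and {D̂_{S_i}}_{i=1}^k be the empirical distributions formed from m i.i.d. samples from each domain (with m ≥ 2d), and let ε̂_{S_i}(h) be the empirical risks on the source samples. Let h* ∈ H minimize ε_T(h) + max_{i∈[k]} ε_{S_i}(h) and set λ := ε_T(h*) + max_{i∈[k]} ε_{S_i}(h*). Then for every 0 < δ < 1, with probability at least 1 − δ over the choice of samples, for every h ∈ H: ε_T(h) ≤ max_{i∈[k]} ε̂_{S_i}(h) + √((1/(2m))·(log(4k/δ) + d·log(me/d))) + (1/2)·d_{HΔH}(D̂_T; {D̂_{S_i}}_{i=1}^k) + √((2/m)·(log(8k/δ) + 2d·log(me/(2d)))) + λ. -/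

import Mathlib

open MeasureTheory Real Filter
open scoped ENNReal NNReal

noncomputable section

variable {X : Type*}

/-- Error of `g` w.r.t. `g'` under distribution `D`: `E_{x ~ D} |g x - g' x|`. -/
def errE [MeasurableSpace X] (D : Measure X) (g g' : X → ℝ) : ℝ :=
  ∫ x, |g x - g' x| ∂D

/-- A binary hypothesis takes values in `{0, 1}`. -/
def IsBinary (h : X → ℝ) : Prop := ∀ x, h x = 0 ∨ h x = 1

/-- The collection `A_H` of supports of hypotheses in a class `H`. -/
def supports (H : Set (X → ℝ)) : Set (Set X) := {A | ∃ h ∈ H, A = {x | h x = 1}}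

/-- `H`-divergence between two distributions:
`d_H(D, D') = 2 sup_{A ∈ A_H} |Pr_D(A) - Pr_{D'}(A)|`. -/
def dHdiv [MeasurableSpace X] (H : Set (X → ℝ)) (D D' : Measure X) : ℝ :=
  2 * sSup {r | ∃ h ∈ H, r = |(D {x | h x = 1}).toReal - (D' {x | h x = 1}).toReal|}

/-- Symmetric difference hypothesis class `H Δ H`
(`h ⊕ h'` is `|h - h'|` for `{0,1}`-valued functions). -/
def symmDiffClass (H : Set (X → ℝ)) : Set (X → ℝ) :=
  {g | ∃ h ∈ H, ∃ h' ∈ H, g = fun x => |h x - h' x|}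

/-- Multi-source divergence: `d_H(D_T; {D_{S_i}}) = max_i d_H(D_T, D_{S_i})`. -/
def dHmulti [MeasurableSpace X] (H : Set (X → ℝ)) (DT : Measure X) {k : ℕ}
    (DS : Fin k → Measure X) : ℝ :=
  ⨆ i : Fin k, dHdiv H DT (DS i)

/-- A set family `C` shatters a finite set `s`. -/
def ShattersSet (C : Set (Set X)) (s : Finset X) : Prop :=
  ∀ t : Set X, t ⊆ (s : Set X) → ∃ A ∈ C, (s : Set X) ∩ A = t

/-- The VC dimension of a set family `C` equals `d`. -/
def VCDimEq (C : Set (Set X)) (d : ℕ) : Prop :=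
  (∃ s : Finset X, s.card = d ∧ ShattersSet C s) ∧
  ∀ s : Finset X, ShattersSet C s → s.card ≤ d

/-- Empirical (uniform) measure of a sample of size `m`. -/
def empMeasure [MeasurableSpace X] {m : ℕ} (xs : Fin m → X) : Measure X :=
  (m : ℝ≥0∞)⁻¹ • ∑ i, Measure.dirac (xs i)

/-- Empirical risk of `h` w.r.t. labeling `f` over the sample `xs`. -/
def empRisk {m : ℕ} (xs : Fin m → X) (h f : X → ℝ) : ℝ :=
  (∑ i, |h (xs i) - f (xs i)|) / m

lemma hoeff_aux [MeasurableSpace X] {m : ℕ} (hm : 0 < m) (D : Measure X) [IsProbabilityMeasure D]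
    (g : X → ℝ) (hg : Measurable g) (a : ℝ) (hb : ∀ x, g x ∈ Set.Icc a (a + 1)) (t : ℝ)
    (ht : 0 ≤ t) :
    (Measure.pi fun _ : Fin m => D).real {xs | t ≤ (∑ i, g (xs i)) / m - ∫ x, g x ∂D}
      ≤ Real.exp (-(2 * m * t ^ 2)) := by
  have hm' : (0 : ℝ) < m := by exact_mod_cast hm
  have hind : ProbabilityTheory.iIndepFun
      (fun (i : Fin m) (ω : Fin m → X) => g (ω i) - ∫ x, g x ∂D) (Measure.pi fun _ : Fin m => D) :=
    ProbabilityTheory.iIndepFun_pi (X := fun _ x => g x - ∫ x, g x ∂D)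
      (fun i => (hg.sub_const _).aemeasurable)
  have hsub : ∀ i ∈ (Finset.univ : Finset (Fin m)), ProbabilityTheory.HasSubgaussianMGF
      (fun (ω : Fin m → X) => g (ω i) - ∫ x, g x ∂D) ((‖(a + 1) - a‖₊ / 2) ^ 2)
      (Measure.pi fun _ : Fin m => D) := by
    intro i _
    have := ProbabilityTheory.hasSubgaussianMGF_of_mem_Icc
      (μ := Measure.pi fun _ : Fin m => D) (X := fun ω => g (ω i)) (a := a) (b := a + 1)
      (hg.comp (measurable_pi_apply i)).aemeasurable (Eventually.of_forall fun ω => hb (ω i))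
    rwa [integral_comp_eval (μ := fun _ : Fin m => D) hg.aestronglyMeasurable] at this
  have key := ProbabilityTheory.HasSubgaussianMGF.measure_sum_ge_le_of_iIndepFun hind hsub
    (ε := m * t) (by positivity)
  have hset : {xs : Fin m → X | t ≤ (∑ i, g (xs i)) / m - ∫ x, g x ∂D}
      = {ω | m * t ≤ ∑ i, (g (ω i) - ∫ x, g x ∂D)} := by
    ext ω
    simp only [Set.mem_setOf_eq, Finset.sum_sub_distrib, Finset.sum_const, Finset.card_univ,
      Fintype.card_fin, nsmul_eq_mul]
    rw [le_sub_iff_add_le, le_div_iff₀ hm', le_sub_iff_add_le]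
    constructor <;> intro h <;> linarith
  rw [hset]
  refine key.trans (Real.exp_le_exp.2 (le_of_eq ?_))
  simp only [add_sub_cancel_left, nnnorm_one, Finset.sum_const, Finset.card_univ, Fintype.card_fin]
  push_cast
  simp only [nsmul_eq_mul]
  field_simp

lemma emp_toReal_aux [MeasurableSpace X] {m : ℕ} (xs : Fin m → X)
    (g : X → ℝ) (hg : Measurable g) (hb : IsBinary g) :
    (empMeasure xs {x | g x = 1}).toReal = (∑ i, g (xs i)) / m := by
  have hs : MeasurableSet {x | g x = 1} := hg (measurableSet_singleton 1)
  unfold empMeasure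
  rw [Measure.smul_apply, Measure.finset_sum_apply, smul_eq_mul, ENNReal.toReal_mul,
    ENNReal.toReal_inv, ENNReal.toReal_natCast, ENNReal.toReal_sum]
  · rw [div_eq_inv_mul]
    congr 1
    refine Finset.sum_congr rfl fun i _ => ?_
    rw [Measure.dirac_apply' _ hs]
    rcases hb (xs i) with h | h <;> simp [Set.indicator, h]
  · intro i _
    exact measure_ne_top _ _

lemma binary_symm {H : Set (X → ℝ)} (hbin : ∀ h ∈ H, IsBinary h) {g : X → ℝ}
    (hg : g ∈ symmDiffClass H) : IsBinary g := by
  obtain ⟨h, hh, h', hh', rfl⟩ := hg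
  intro x
  rcases hbin h hh x with a | a <;> rcases hbin h' hh' x with b | b <;> simp [a, b]

lemma meas_symm [MeasurableSpace X] {H : Set (X → ℝ)} (hmeas : ∀ h ∈ H, Measurable h) {g : X → ℝ}
    (hg : g ∈ symmDiffClass H) : Measurable g := by
  obtain ⟨h, hh, h', hh', rfl⟩ := hg
  have := hmeas h hh
  have := hmeas h' hh'
  fun_prop

lemma emp_bd [MeasurableSpace X] {m : ℕ} (xs : Fin m → X)
    (g : X → ℝ) (hg : Measurable g) (hb : IsBinary g) :
    0 ≤ (empMeasure xs {x | g x = 1}).toReal ∧ (empMeasure xs {x | g x = 1}).toReal ≤ 1 := by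
  refine ⟨ENNReal.toReal_nonneg, ?_⟩
  rw [emp_toReal_aux xs g hg hb]
  refine div_le_one_of_le₀ ?_ (Nat.cast_nonneg m)
  calc ∑ i, g (xs i) ≤ ∑ i : Fin m, (1 : ℝ) := Finset.sum_le_sum fun i _ => by
        rcases hb (xs i) with h | h <;> simp [h]
    _ = m := by simp

lemma dH_facts [MeasurableSpace X] {k m : ℕ} (i0 : Fin k) (H : Set (X → ℝ))
    (hbin : ∀ h ∈ H, IsBinary h) (hmeas : ∀ h ∈ H, Measurable h)
    (x : Fin m → X) (ys : Fin k → Fin m → X) :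
    (1 / 2) * dHmulti (symmDiffClass H) (empMeasure x) (fun i => empMeasure (ys i)) ≤ 1 ∧
    ∀ g ∈ symmDiffClass H, (∑ j, g (x j)) / m - (∑ j, g (ys i0 j)) / m ≤
      (1 / 2) * dHmulti (symmDiffClass H) (empMeasure x) (fun i => empMeasure (ys i)) := by
  have hbd : ∀ i, ∀ r ∈ {r | ∃ h ∈ symmDiffClass H, r = |(empMeasure x {z | h z = 1}).toReal
      - (empMeasure (ys i) {z | h z = 1}).toReal|}, r ≤ 1 := by
    rintro i r ⟨g, hg, rfl⟩
    have h1 := emp_bd x g (meas_symm hmeas hg) (binary_symm hbin hg)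
    have h2 := emp_bd (ys i) g (meas_symm hmeas hg) (binary_symm hbin hg)
    rw [abs_le]; constructor <;> linarith [h1.1, h1.2, h2.1, h2.2]
  constructor
  · have : dHmulti (symmDiffClass H) (empMeasure x) (fun i => empMeasure (ys i)) ≤ 2 := by
      haveI : Nonempty (Fin k) := ⟨i0⟩
      refine ciSup_le fun i => ?_
      have := Real.sSup_le (hbd i) zero_le_one
      unfold dHdiv
      linarith
    linarith
  · intro g hg
    have h1 : dHdiv (symmDiffClass H) (empMeasure x) (empMeasure (ys i0)) ≤
        dHmulti (symmDiffClass H) (empMeasure x) (fun i => empMeasure (ys i)) :=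
      le_ciSup (f := fun i => dHdiv (symmDiffClass H) (empMeasure x) (empMeasure (ys i)))
        (Set.finite_range _).bddAbove i0
    have h2 := le_csSup ⟨1, hbd i0⟩ ⟨g, hg, rfl⟩
    rw [emp_toReal_aux x g (meas_symm hmeas hg) (binary_symm hbin hg),
      emp_toReal_aux (ys i0) g (meas_symm hmeas hg) (binary_symm hbin hg)] at h2
    have h3 := le_abs_self ((∑ j, g (x j)) / m - (∑ j, g (ys i0 j)) / m)
    unfold dHdiv at h1
    linarith

lemma abs_bd {u v : ℝ} (hu : u = 0 ∨ u = 1) (hv : v ∈ Set.Icc (0:ℝ) 1) :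
    |u - v| ∈ Set.Icc (0:ℝ) 1 := by
  refine ⟨abs_nonneg _, ?_⟩
  rw [abs_le]
  rcases hu with h | h <;> subst h <;> constructor <;> linarith [hv.1, hv.2]

lemma bin_mem {u : ℝ} (hu : u = 0 ∨ u = 1) : u ∈ Set.Icc (0:ℝ) 1 := by
  rcases hu with h | h <;> simp [h]

lemma int_aux [MeasurableSpace X] (D : Measure X) [IsProbabilityMeasure D] {g g' : X → ℝ}
    (hg : Measurable g) (hg' : Measurable g') (hb : IsBinary g)
    (hb' : ∀ x, g' x ∈ Set.Icc (0:ℝ) 1) : Integrable (fun x => |g x - g' x|) D :=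
  Integrable.of_mem_Icc 0 1 (by fun_prop) (Eventually.of_forall fun x => abs_bd (hb x) (hb' x))

lemma section_aux [MeasurableSpace X] {k m : ℕ} (hm : 0 < m) (i0 : Fin k)
    (DT : Measure X) [IsProbabilityMeasure DT]
    (fT : X → ℝ) (fS : Fin k → X → ℝ) (hfT : Measurable fT)
    (hfTb : ∀ x, fT x ∈ Set.Icc (0:ℝ) 1)
    (H : Set (X → ℝ)) (hbin : ∀ h ∈ H, IsBinary h) (hmeas : ∀ h ∈ H, Measurable h)
    (hstar : X → ℝ) (hstarH : hstar ∈ H) (c lam t1 t2 : ℝ) (ht2 : 0 < t2)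
    (hlam : errE DT hstar fT + c ≤ lam)
    (ys : Fin k → Fin m → X) (hys : empRisk (ys i0) hstar (fS i0) ≤ c + t1) :
    ENNReal.ofReal (1 - Real.exp (-(2 * m * (t2 / 2) ^ 2))) ≤
      (Measure.pi fun _ : Fin m => DT) {x | ∀ h ∈ H, errE DT h fT ≤
        (⨆ i, empRisk (ys i) h (fS i)) + t1 + (1 / 2) * dHmulti (symmDiffClass H) (empMeasure x)
          (fun i => empMeasure (ys i)) + t2 + lam} := by
  set Δ : (Fin m → X) → ℝ := fun x => (1 / 2) * dHmulti (symmDiffClass H) (empMeasure x)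
          (fun i => empMeasure (ys i)) with hΔ
  set G := {x | ∀ h ∈ H, errE DT h fT ≤
        (⨆ i, empRisk (ys i) h (fS i)) + t1 + Δ x + t2 + lam} with hG
  have hm' : (0 : ℝ) < m := by exact_mod_cast hm
  by_cases hne : (Gᶜ).Nonempty
  swap
  · have : G = Set.univ := by
      rw [Set.not_nonempty_iff_eq_empty] at hne
      simpa using hne
    rw [this, measure_univ, ← ENNReal.ofReal_one]
    exact ENNReal.ofReal_le_ofReal (by linarith [Real.exp_pos (-(2 * m * (t2 / 2) ^ 2))])
  have hbdd : BddAbove (Δ '' Gᶜ) := ⟨1, by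
    rintro _ ⟨x, _, rfl⟩
    exact (dH_facts i0 H hbin hmeas x ys).1⟩
  -- deterministic consequence of being bad
  have hbad : ∀ x ∈ Gᶜ, ∃ h ∈ H, (∑ j, |h (ys i0 j) - hstar (ys i0 j)|) / m + Δ x + t2
      < errE DT h hstar := by
    intro x hx
    simp only [hG, Set.mem_compl_iff, Set.mem_setOf_eq, not_forall, not_le] at hx
    obtain ⟨h, hh, hx⟩ := hx
    refine ⟨h, hh, ?_⟩
    have h1 : empRisk (ys i0) h (fS i0) ≤ ⨆ i, empRisk (ys i) h (fS i) :=
      le_ciSup (f := fun i => empRisk (ys i) h (fS i)) (Set.finite_range _).bddAbove i0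
    have h2 : (∑ j, |h (ys i0 j) - hstar (ys i0 j)|) / m ≤
        empRisk (ys i0) h (fS i0) + empRisk (ys i0) hstar (fS i0) := by
      unfold empRisk
      rw [← add_div, ← Finset.sum_add_distrib]
      gcongr with j
      rw [abs_sub_comm (hstar _)]
      exact abs_sub_le _ _ _
    have h3 : errE DT h fT ≤ errE DT h hstar + errE DT hstar fT := by
      unfold errE
      rw [← integral_add]
      · refine integral_mono ?_ ?_ ?_
        · exact int_aux DT (hmeas h hh) hfT (hbin h hh) hfTb
        · exact (int_aux DT (hmeas h hh) (hmeas _ hstarH) (hbin h hh)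
            (fun x => bin_mem (hbin _ hstarH x))).add
            (int_aux DT (hmeas _ hstarH) hfT (hbin _ hstarH) hfTb)
        · intro x
          exact abs_sub_le _ _ _
      · exact int_aux DT (hmeas h hh) (hmeas _ hstarH) (hbin h hh)
            (fun x => bin_mem (hbin _ hstarH x))
      · exact int_aux DT (hmeas _ hstarH) hfT (hbin _ hstarH) hfTb
    linarith
  obtain ⟨_, ⟨x0, hx0, rfl⟩, hx0s⟩ := exists_lt_of_lt_csSup (hne.image Δ)
    (show sSup (Δ '' Gᶜ) - t2 / 2 < sSup (Δ '' Gᶜ) by linarith)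
  obtain ⟨h, hh, hlt⟩ := hbad x0 hx0
  have hgS : (fun x => |h x - hstar x|) ∈ symmDiffClass H := ⟨h, hh, hstar, hstarH, rfl⟩
  have hgm : Measurable (fun x => |h x - hstar x|) := meas_symm hmeas hgS
  have hho := hoeff_aux hm DT (fun x => -|h x - hstar x|) hgm.neg (-1)
    (fun x => by
      have := abs_bd (hbin h hh x) (bin_mem (hbin _ hstarH x))
      constructor <;> linarith [this.1, this.2]) (t2 / 2) (by linarith)
  set B := {xs : Fin m → X | t2 / 2 ≤ (∑ i, -|h (xs i) - hstar (xs i)|) / m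
      - ∫ x, -|h x - hstar x| ∂DT} with hB
  have hBm : MeasurableSet B := by
    refine measurableSet_le measurable_const ?_
    refine Measurable.sub_const (Measurable.div_const ?_ _) _
    exact Finset.measurable_sum _ fun i _ => hgm.neg.comp (measurable_pi_apply i)
  have hsubset : Bᶜ ⊆ G := by
    intro x hx
    by_contra hxG
    have h1 : Δ x ≤ sSup (Δ '' Gᶜ) := le_csSup hbdd ⟨x, hxG, rfl⟩
    have h2 := (dH_facts i0 H hbin hmeas x ys).2 _ hgS
    simp only [hB, Set.mem_compl_iff, Set.mem_setOf_eq, not_le, Finset.sum_neg_distrib,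
      integral_neg, neg_div] at hx
    change _ ≤ Δ x at h2
    unfold errE at hlt
    linarith
  calc ENNReal.ofReal (1 - Real.exp (-(2 * m * (t2 / 2) ^ 2)))
      ≤ ENNReal.ofReal ((Measure.pi fun _ : Fin m => DT).real Bᶜ) := by
        apply ENNReal.ofReal_le_ofReal
        rw [probReal_compl_eq_one_sub hBm]
        linarith
    _ = (Measure.pi fun _ : Fin m => DT) Bᶜ := ofReal_measureReal
    _ ≤ _ := measure_mono hsubset

lemma main_aux [MeasurableSpace X] {k m : ℕ} (hm : 0 < m) (i0 : Fin k)
    (DT : Measure X) (DS : Fin k → Measure X)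
    [IsProbabilityMeasure DT] [∀ i, IsProbabilityMeasure (DS i)]
    (fT : X → ℝ) (fS : Fin k → X → ℝ) (hfT : Measurable fT) (hfS : ∀ i, Measurable (fS i))
    (hfTb : ∀ x, fT x ∈ Set.Icc (0:ℝ) 1) (hfSb : ∀ i x, fS i x ∈ Set.Icc (0:ℝ) 1)
    (H : Set (X → ℝ)) (hbin : ∀ h ∈ H, IsBinary h) (hmeas : ∀ h ∈ H, Measurable h)
    (hstar : X → ℝ) (hstarH : hstar ∈ H) (lam t1 t2 δ : ℝ) (ht1 : 0 ≤ t1) (ht2 : 0 < t2)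
    (hlam : errE DT hstar fT + errE (DS i0) hstar (fS i0) ≤ lam)
    (hδ : 0 < δ) (hδ1 : δ < 1)
    (he1 : Real.exp (-(2 * m * t1 ^ 2)) ≤ δ / 4)
    (he2 : Real.exp (-(2 * m * (t2 / 2) ^ 2)) ≤ δ / 4) :
    ENNReal.ofReal (1 - δ) ≤
      ((Measure.pi fun _ : Fin m => DT).prod
          (Measure.pi fun i : Fin k => Measure.pi fun _ : Fin m => DS i))
        {ω : (Fin m → X) × (Fin k → Fin m → X) | ∀ h ∈ H, errE DT h fT ≤
        (⨆ i, empRisk (ω.2 i) h (fS i)) + t1 + (1 / 2) * dHmulti (symmDiffClass H) (empMeasure ω.1)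
          (fun i => empMeasure (ω.2 i)) + t2 + lam} := by
  set μ := (Measure.pi fun _ : Fin m => DT)
  set ν := (Measure.pi fun i : Fin k => Measure.pi fun _ : Fin m => DS i)
  set G := {ω : (Fin m → X) × (Fin k → Fin m → X) | ∀ h ∈ H, errE DT h fT ≤
        (⨆ i, empRisk (ω.2 i) h (fS i)) + t1 + (1 / 2) * dHmulti (symmDiffClass H) (empMeasure ω.1)
          (fun i => empMeasure (ω.2 i)) + t2 + lam}
  have hgm : Measurable (fun x => |hstar x - fS i0 x|) := by
    have := hmeas _ hstarH
    have := hfS i0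
    fun_prop
  have hho := hoeff_aux hm (DS i0) (fun x => |hstar x - fS i0 x|) hgm 0
    (fun x => by
      have := abs_bd (hbin _ hstarH x) (hfSb i0 x)
      simpa using this) t1 ht1
  set B := {xs : Fin m → X | t1 ≤ (∑ i, |hstar (xs i) - fS i0 (xs i)|) / m
      - ∫ x, |hstar x - fS i0 x| ∂(DS i0)} with hB
  have hBm : MeasurableSet B := by
    refine measurableSet_le measurable_const ?_
    refine Measurable.sub_const (Measurable.div_const ?_ _) _
    exact Finset.measurable_sum _ fun i _ => hgm.comp (measurable_pi_apply i)
  have hYm : MeasurableSet ((Function.eval i0 : (Fin k → Fin m → X) → _) ⁻¹' Bᶜ) :=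
    measurable_pi_apply i0 hBm.compl
  have hY : ENNReal.ofReal (1 - δ / 4) ≤ ν (Function.eval i0 ⁻¹' Bᶜ) := by
    rw [(measurePreserving_eval (fun i : Fin k => Measure.pi fun _ : Fin m => DS i) i0).measure_preimage
      hBm.compl.nullMeasurableSet]
    calc ENNReal.ofReal (1 - δ / 4)
        ≤ ENNReal.ofReal ((Measure.pi fun _ : Fin m => DS i0).real Bᶜ) := by
          apply ENNReal.ofReal_le_ofReal
          rw [probReal_compl_eq_one_sub hBm]
          linarith
      _ = (Measure.pi fun _ : Fin m => DS i0) Bᶜ := ofReal_measureReal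
  rw [← measure_toMeasurable G, Measure.prod_apply_symm (measurableSet_toMeasurable _ _)]
  calc ENNReal.ofReal (1 - δ) ≤ ENNReal.ofReal (1 - δ / 4) * ENNReal.ofReal (1 - δ / 4) := by
        rw [← ENNReal.ofReal_mul (by linarith)]
        exact ENNReal.ofReal_le_ofReal (by nlinarith)
    _ ≤ ENNReal.ofReal (1 - δ / 4) * ν (Function.eval i0 ⁻¹' Bᶜ) := by gcongr
    _ = ∫⁻ y in (Function.eval i0 ⁻¹' Bᶜ), ENNReal.ofReal (1 - δ / 4) ∂ν := by
        rw [setLIntegral_const]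
    _ ≤ ∫⁻ y in (Function.eval i0 ⁻¹' Bᶜ),
          μ ((fun x => (x, y)) ⁻¹' toMeasurable (μ.prod ν) G) ∂ν := by
        refine setLIntegral_mono' hYm fun y hy => ?_
        have hy' : empRisk (y i0) hstar (fS i0) ≤ errE (DS i0) hstar (fS i0) + t1 := by
          simp only [hB, Set.mem_preimage, Function.eval, Set.mem_compl_iff, Set.mem_setOf_eq,
            not_le] at hy
          unfold empRisk errE
          linarith
        have := section_aux hm i0 DT fT fS hfT hfTb H hbin hmeas hstar hstarH _ lam t1 t2 ht2 hlam
          y hy'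
        refine (ENNReal.ofReal_le_ofReal (by linarith)).trans (this.trans (measure_mono ?_))
        intro x hx
        exact subset_toMeasurable _ _ hx
    _ ≤ _ := setLIntegral_le_lintegral _ _

lemma exp_aux {m : ℕ} (hm : 0 < m) {A δ K : ℝ} (hδ : 0 < δ) (hK : 4 ≤ K)
    (hA : Real.log (K / δ) ≤ A) (hA0 : 0 ≤ A) :
    Real.exp (-(2 * m * (Real.sqrt (1 / (2 * m) * A)) ^ 2)) ≤ δ / 4 := by
  have hm' : (0 : ℝ) < m := by exact_mod_cast hm
  rw [Real.sq_sqrt (by positivity)]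
  have : 2 * (m:ℝ) * (1 / (2 * m) * A) = A := by field_simp
  rw [this]
  calc Real.exp (-A) ≤ Real.exp (-Real.log (K / δ)) := Real.exp_le_exp.2 (by linarith)
    _ = δ / K := by
      rw [Real.exp_neg, Real.exp_log (by positivity), inv_div]
    _ ≤ δ / 4 := by gcongr

/-- Main generalization bound for multiple source domain adaptation
(Theorem 5 of the paper). -/
theorem multi_source_generalization_bound [MeasurableSpace X] {k d m : ℕ}
    (hk : 0 < k) (hmd : 2 * d ≤ m)
    (DT : Measure X) (DS : Fin k → Measure X)
    [IsProbabilityMeasure DT] [∀ i, IsProbabilityMeasure (DS i)]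
    (fT : X → ℝ) (fS : Fin k → X → ℝ)
    (hfT : Measurable fT) (hfS : ∀ i, Measurable (fS i))
    (hfTb : ∀ x, fT x ∈ Set.Icc (0:ℝ) 1) (hfSb : ∀ i x, fS i x ∈ Set.Icc (0:ℝ) 1)
    (H : Set (X → ℝ)) (hbin : ∀ h ∈ H, IsBinary h) (hmeas : ∀ h ∈ H, Measurable h)
    (hVC : VCDimEq (supports H) d)
    (hstar : X → ℝ) (hstarH : hstar ∈ H)
    (hstarOpt : ∀ h ∈ H,
      errE DT hstar fT + ⨆ i, errE (DS i) hstar (fS i)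
        ≤ errE DT h fT + ⨆ i, errE (DS i) h (fS i))
    (lam : ℝ) (hlam : lam = errE DT hstar fT + ⨆ i, errE (DS i) hstar (fS i))
    (δ : ℝ) (hδ : 0 < δ) (hδ1 : δ < 1) :
    ENNReal.ofReal (1 - δ) ≤
      ((Measure.pi fun _ : Fin m => DT).prod
          (Measure.pi fun i : Fin k => Measure.pi fun _ : Fin m => DS i))
        {ω : (Fin m → X) × (Fin k → Fin m → X) | ∀ h ∈ H,
          errE DT h fT
            ≤ (⨆ i, empRisk (ω.2 i) h (fS i))
              + Real.sqrt ((1 / (2 * m))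
                  * (Real.log (4 * k / δ) + d * Real.log (m * Real.exp 1 / d)))
              + (1 / 2) * dHmulti (symmDiffClass H) (empMeasure ω.1)
                  (fun i => empMeasure (ω.2 i))
              + Real.sqrt ((2 / m)
                  * (Real.log (8 * k / δ) + 2 * d * Real.log (m * Real.exp 1 / (2 * d))))
              + lam} := by
  have hd : 0 ≤ (d:ℝ) * Real.log (m * Real.exp 1 / d) ∧
      0 ≤ 2 * (d:ℝ) * Real.log (m * Real.exp 1 / (2 * d)) := by
    rcases Nat.eq_zero_or_pos d with h0 | h0
    · subst h0; simp
    have hd' : (0:ℝ) < d := by exact_mod_cast h0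
    have hmd' : 2 * (d:ℝ) ≤ m := by exact_mod_cast hmd
    have he : (1:ℝ) ≤ Real.exp 1 := Real.one_le_exp zero_le_one
    have hme : (m:ℝ) ≤ m * Real.exp 1 := le_mul_of_one_le_right (by linarith) he
    constructor
    · refine mul_nonneg hd'.le (Real.log_nonneg ?_)
      rw [le_div_iff₀ hd']; linarith
    · refine mul_nonneg (by linarith) (Real.log_nonneg ?_)
      rw [le_div_iff₀ (by linarith)]; linarith
  set i0 : Fin k := ⟨0, hk⟩
  have hk1 : (1:ℝ) ≤ k := by exact_mod_cast hk
  have hlam' : errE DT hstar fT + errE (DS i0) hstar (fS i0) ≤ lam := by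
    have := le_ciSup (f := fun i => errE (DS i) hstar (fS i)) (Set.finite_range _).bddAbove i0
    rw [hlam]
    linarith
  rcases Nat.eq_zero_or_pos m with h0 | hm
  · subst h0
    have hd0 : d = 0 := by omega
    subst hd0
    have heq : ∀ h ∈ H, h = hstar := by
      intro h hh
      by_contra hne
      obtain ⟨x, hx⟩ := Function.ne_iff.1 hne
      have hsh : ShattersSet (supports H) {x} := by
        have key : ∀ u ∈ H, u x = 1 → ∀ v ∈ H, v x = 0 → ShattersSet (supports H) {x} := by
          intro u hu hux v hv hvx t ht
          rw [Finset.coe_singleton] at ht ⊢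
          rcases Set.subset_singleton_iff_eq.1 ht with rfl | rfl
          · refine ⟨_, ⟨v, hv, rfl⟩, ?_⟩
            ext z
            simp only [Set.mem_inter_iff, Set.mem_singleton_iff, Set.mem_setOf_eq,
              Set.mem_empty_iff_false, iff_false, not_and]
            rintro rfl
            simp [hvx]
          · refine ⟨_, ⟨u, hu, rfl⟩, ?_⟩
            ext z
            simp only [Set.mem_inter_iff, Set.mem_singleton_iff, Set.mem_setOf_eq,
              and_iff_left_iff_imp]
            rintro rfl
            exact hux
        rcases hbin h hh x with a | a <;> rcases hbin _ hstarH x with b | b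
        · exact absurd (a.trans b.symm) hx
        · exact key _ hstarH b _ hh a
        · exact key _ hh a _ hstarH b
        · exact absurd (a.trans b.symm) hx
      have := hVC.2 _ hsh
      simp at this
    have huniv : ∀ ω : (Fin 0 → X) × (Fin k → Fin 0 → X), ∀ h ∈ H, errE DT h fT
            ≤ (⨆ i, empRisk (ω.2 i) h (fS i))
              + Real.sqrt ((1 / (2 * (0:ℕ)))
                  * (Real.log (4 * k / δ) + (0:ℕ) * Real.log ((0:ℕ) * Real.exp 1 / (0:ℕ))))
              + (1 / 2) * dHmulti (symmDiffClass H) (empMeasure ω.1)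
                  (fun i => empMeasure (ω.2 i))
              + Real.sqrt ((2 / (0:ℕ))
                  * (Real.log (8 * k / δ) + 2 * (0:ℕ)
                    * Real.log ((0:ℕ) * Real.exp 1 / (2 * (0:ℕ)))))
              + lam := by
      intro ω h hh
      rw [heq h hh]
      have h1 : (0:ℝ) ≤ ⨆ i, empRisk (ω.2 i) hstar (fS i) :=
        Real.iSup_nonneg fun i => by simp [empRisk]
      have h2 := (dH_facts i0 H hbin hmeas ω.1 ω.2).2 _ ⟨hstar, hstarH, hstar, hstarH, rfl⟩
      simp only [Finset.univ_eq_empty, Finset.sum_empty, zero_div, sub_zero] at h2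
      have h3 : 0 ≤ errE (DS i0) hstar (fS i0) := integral_nonneg fun x => abs_nonneg _
      have h4 := Real.sqrt_nonneg ((1 / (2 * (0:ℕ)))
                  * (Real.log (4 * k / δ) + (0:ℕ) * Real.log ((0:ℕ) * Real.exp 1 / (0:ℕ))))
      have h5 := Real.sqrt_nonneg ((2 / (0:ℕ))
                  * (Real.log (8 * k / δ) + 2 * (0:ℕ)
                    * Real.log ((0:ℕ) * Real.exp 1 / (2 * (0:ℕ)))))
      linarith
    rw [Set.eq_univ_of_forall (s := {ω : (Fin 0 → X) × (Fin k → Fin 0 → X) | _}) huniv,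
      measure_univ, ← ENNReal.ofReal_one]
    exact ENNReal.ofReal_le_ofReal (by linarith)
  have hm' : (0 : ℝ) < m := by exact_mod_cast hm
  have hl4 : 0 < Real.log (4 * k / δ) := by
    refine Real.log_pos ?_
    rw [lt_div_iff₀ hδ]; linarith
  have hl8 : 0 < Real.log (8 * k / δ) := by
    refine Real.log_pos ?_
    rw [lt_div_iff₀ hδ]; linarith
  refine main_aux hm i0 DT DS fT fS hfT hfS hfTb hfSb H hbin hmeas hstar hstarH lam _ _ δ
    (Real.sqrt_nonneg _) (Real.sqrt_pos.2 (mul_pos (by positivity) (by linarith [hd.2]))) hlam'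
    hδ hδ1 ?_ ?_
  · exact exp_aux hm hδ (K := 4 * k) (by linarith) (by linarith [hd.1]) (by linarith [hd.1])
  · have h2 : Real.sqrt ((2 / m)
                  * (Real.log (8 * k / δ) + 2 * d * Real.log (m * Real.exp 1 / (2 * d)))) / 2
        = Real.sqrt (1 / (2 * m)
                  * (Real.log (8 * k / δ) + 2 * d * Real.log (m * Real.exp 1 / (2 * d)))) := by
      rw [div_eq_iff two_ne_zero, mul_comm _ (2:ℝ)]
      refine (Real.sqrt_eq_iff_mul_self_eq (mul_nonneg (by positivity) (by linarith [hd.2]))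
        (by positivity)).2 ?_
      have := Real.mul_self_sqrt (show 0 ≤ 1 / (2 * m)
        * (Real.log (8 * k / δ) + 2 * d * Real.log (m * Real.exp 1 / (2 * d))) from
        mul_nonneg (by positivity) (by linarith [hd.2]))
      rw [mul_mul_mul_comm, this]
      field_simp
    rw [h2]
    exact exp_aux hm hδ (K := 8 * k) (by linarith) (by linarith [hd.2]) (by linarith [hd.2])
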